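/- Fix a joint leader action a and suppose the follower's UCB-E subroutine for a is run with parameter e satisfying 0 < e ≤ (25/36)(T_a − n_f)/H_a, where T_a is the number of rounds in which a is played during the exploration phase and H_a = ∑_{k=1}^{n_f} 1/Δ_{ak}². Then the probability that the resulting best response predictor is wrong satisfies P(B̂r(a) ≠ Br(a)) ≤ 2 T_a n_f exp(−2e/25). In particular, for e = (25/36)(T_a − n_f)/H_a, P(B̂r(a) ≠ Br(a)) ≤ 2 T_a n_f exp(−(T_a − n_f)/(18 H_a)). -/

import Mathlib

open MeasureTheory Finset
open scoped Classical

noncomputable section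

/-- An (arbitrary, via choice) index attaining the minimum of `f` over `Fin k`. -/
def argminF {k : ℕ} [NeZero k] (f : Fin k → ℝ) : Fin k :=
  Classical.choose (Finset.exists_min_image Finset.univ f ⟨0, Finset.mem_univ 0⟩)

/-- Number of pulls of arm `k` recorded in the history `h`. -/
def cntK {nf : ℕ} (h : List (Fin nf × ℝ)) (k : Fin nf) : ℕ :=
  (h.filter fun x => x.1 = k).length

/-- Empirical mean loss of arm `k` in the history `h`. -/
def muHat {nf : ℕ} (h : List (Fin nf × ℝ)) (k : Fin nf) : ℝ :=
  (((h.filter fun x => x.1 = k).map fun x => x.2).sum) / cntK h k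

/-- The UCB-E choice with exploration parameter `e`: pull an unpulled arm first, otherwise pick
the arm minimizing the index `μ̂_k − √(e / T_k)`. -/
def ucbEChoice {nf : ℕ} [NeZero nf] (e : ℝ) (h : List (Fin nf × ℝ)) : Fin nf :=
  let unpulled := Finset.univ.filter fun k : Fin nf => cntK h k = 0
  if hu : unpulled.Nonempty then unpulled.min' hu
  else argminF fun k => muHat h k - Real.sqrt (e / cntK h k)

/-- Extension of a finite trajectory to `ℕ` (junk value after time `N`). -/
def eOf {E : Type} [Inhabited E] (N : ℕ) (ω : Fin N → E) (t : ℕ) : E :=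
  if h : t < N then ω ⟨t, h⟩ else default

/-- History of the UCB-E process after `t` pulls along the noise trajectory `e'`. -/
def ucbEState {nf : ℕ} [NeZero nf] (e : ℝ) (e' : ℕ → Fin nf → ℝ) : ℕ → List (Fin nf × ℝ)
  | 0 => []
  | t + 1 =>
    let h := ucbEState e e' t
    let k := ucbEChoice e h
    (k, e' t k) :: h

/-- The best response (best arm) predictor after `Ta` pulls of UCB-E: the arm with the smallest
empirical mean loss. -/
def brHatE {nf : ℕ} [NeZero nf] (e : ℝ) (e' : ℕ → Fin nf → ℝ) (Ta : ℕ) : Fin nf :=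
  argminF fun k => muHat (ucbEState e e' Ta) k


theorem argminF_le {k : ℕ} [NeZero k] (f : Fin k → ℝ) (j : Fin k) : f (argminF f) ≤ f j := by
  have h := Classical.choose_spec
    (Finset.exists_min_image Finset.univ f ⟨0, Finset.mem_univ 0⟩)
  exact h.2 j (Finset.mem_univ j)

def sumK {nf : ℕ} (h : List (Fin nf × ℝ)) (k : Fin nf) : ℝ :=
  ((h.filter fun x => x.1 = k).map fun x => x.2).sum

theorem muHat_eq {nf : ℕ} (h : List (Fin nf × ℝ)) (k : Fin nf) :
    muHat h k = sumK h k / cntK h k := rfl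

theorem cntK_cons {nf : ℕ} (h : List (Fin nf × ℝ)) (p : Fin nf) (x : ℝ) (k : Fin nf) :
    cntK ((p, x) :: h) k = cntK h k + if p = k then 1 else 0 := by
  unfold cntK
  by_cases hp : p = k <;> simp [hp]

theorem sumK_cons {nf : ℕ} (h : List (Fin nf × ℝ)) (p : Fin nf) (x : ℝ) (k : Fin nf) :
    sumK ((p, x) :: h) k = sumK h k + if p = k then x else 0 := by
  unfold sumK
  by_cases hp : p = k <;> simp [hp, add_comm]

section det

variable {nf : ℕ} [NeZero nf] (e : ℝ) (e' : ℕ → Fin nf → ℝ)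

theorem cnt_succ (t : ℕ) (k : Fin nf) :
    cntK (ucbEState e e' (t + 1)) k =
      cntK (ucbEState e e' t) k + if ucbEChoice e (ucbEState e e' t) = k then 1 else 0 := by
  rw [ucbEState]
  exact cntK_cons _ _ _ _

theorem sum_succ' (t : ℕ) (k : Fin nf) :
    sumK (ucbEState e e' (t + 1)) k =
      sumK (ucbEState e e' t) k +
        if ucbEChoice e (ucbEState e e' t) = k then e' t k else 0 := by
  rw [ucbEState]
  refine (sumK_cons _ _ _ _).trans ?_
  split_ifs with h
  · rw [h]
  · rfl

theorem cnt_mono (k : Fin nf) : Monotone fun t => cntK (ucbEState e e' t) k :=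
  monotone_nat_of_le_succ fun t => by
    have := cnt_succ e e' t k
    omega

theorem cnt_total (t : ℕ) : ∑ k, cntK (ucbEState e e' t) k = t := by
  induction t with
  | zero => simp [ucbEState, cntK]
  | succ t ih =>
    simp only [cnt_succ, Finset.sum_add_distrib, ih]
    simp

theorem choice_unpulled (h : List (Fin nf × ℝ)) (j : Fin nf) (hj : cntK h j = 0) :
    cntK h (ucbEChoice e h) = 0 := by
  have hu : (Finset.univ.filter fun k : Fin nf => cntK h k = 0).Nonempty :=
    ⟨j, by simp [hj]⟩
  have : ucbEChoice e h = (Finset.univ.filter fun k : Fin nf => cntK h k = 0).min' hu := by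
    unfold ucbEChoice
    simp only [hu, dite_true]
  rw [this]
  have := Finset.min'_mem _ hu
  simpa using this

theorem choice_pulled (h : List (Fin nf × ℝ)) (hp : ∀ j, cntK h j ≠ 0) (j : Fin nf) :
    muHat h (ucbEChoice e h) - Real.sqrt (e / cntK h (ucbEChoice e h)) ≤
      muHat h j - Real.sqrt (e / cntK h j) := by
  have hu : ¬ (Finset.univ.filter fun k : Fin nf => cntK h k = 0).Nonempty := by
    rintro ⟨i, hi⟩
    simp only [Finset.mem_filter] at hi
    exact hp i hi.2
  have : ucbEChoice e h = argminF fun k => muHat h k - Real.sqrt (e / cntK h k) := by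
    unfold ucbEChoice
    simp only [hu, dite_false]
  rw [this]
  exact argminF_le (fun k => muHat h k - Real.sqrt (e / cntK h k)) j

theorem cnt_le_one (t : ℕ) (j : Fin nf) (hj : cntK (ucbEState e e' t) j = 0) (k : Fin nf) :
    cntK (ucbEState e e' t) k ≤ 1 := by
  induction t with
  | zero => simp [ucbEState, cntK]
  | succ t ih =>
    have h1 := cnt_succ e e' t j
    have h2 := ih (by omega)
    have h3 := choice_unpulled e (ucbEState e e' t) j (by omega)
    rw [cnt_succ]
    split_ifs with h
    · rw [h] at h3; omega
    · omega

theorem all_pulled (t : ℕ) (ht : nf ≤ t) (j : Fin nf) : 1 ≤ cntK (ucbEState e e' t) j := by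
  by_contra hc
  have h0 : cntK (ucbEState e e' t) j = 0 := by omega
  have h1 := cnt_le_one e e' t j h0
  have h2 := cnt_total e e' t
  have h3 : ∑ k, cntK (ucbEState e e' t) k < ∑ _k : Fin nf, 1 :=
    Finset.sum_lt_sum (fun k _ => h1 k) ⟨j, Finset.mem_univ j, by omega⟩
  simp at h3
  omega

theorem last_pull (T : ℕ) (k : Fin nf) (hk : 2 ≤ cntK (ucbEState e e' T) k) :
    ∃ t < T, cntK (ucbEState e e' t) k + 1 = cntK (ucbEState e e' T) k ∧
      ucbEChoice e (ucbEState e e' t) = k := by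
  induction T with
  | zero => simp [ucbEState, cntK] at hk
  | succ T ih =>
    have h1 := cnt_succ e e' T k
    by_cases h : ucbEChoice e (ucbEState e e' T) = k
    · exact ⟨T, by omega, by simp [h1, h], h⟩
    · simp only [h, if_false, add_zero] at h1
      obtain ⟨t, ht, h2, h3⟩ := ih (by omega)
      exact ⟨t, by omega, by omega, h3⟩

theorem last_pull' (T : ℕ) (k : Fin nf) (hk : 2 ≤ cntK (ucbEState e e' T) k) :
    ∃ t ≤ T, cntK (ucbEState e e' t) k + 1 = cntK (ucbEState e e' T) k ∧
      ∀ j, 1 ≤ cntK (ucbEState e e' t) j ∧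
        cntK (ucbEState e e' t) j ≤ cntK (ucbEState e e' T) j ∧
        muHat (ucbEState e e' t) k - Real.sqrt (e / cntK (ucbEState e e' t) k) ≤
          muHat (ucbEState e e' t) j - Real.sqrt (e / cntK (ucbEState e e' t) j) := by
  obtain ⟨t, ht, h2, h3⟩ := last_pull e e' T k hk
  have hp : ∀ j, cntK (ucbEState e e' t) j ≠ 0 := by
    intro j hj
    have := choice_unpulled e _ j hj
    rw [h3] at this
    omega
  refine ⟨t, ht.le, h2, fun j => ⟨Nat.one_le_iff_ne_zero.2 (hp j), cnt_mono e e' j ht.le, ?_⟩⟩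
  have := choice_pulled e _ hp j
  rwa [h3] at this

theorem good_imp (T : ℕ) (hT : nf ≤ T) (lf : Fin nf → ℝ) (br : Fin nf)
    (hbr : ∀ k, k ≠ br → lf br < lf k) (he : 0 < e)
    (hH : 36 / 25 * e * ∑ k, 1 / (lf k - lf br) ^ 2 ≤ (T : ℝ) - nf)
    (hg : ∀ t ≤ T, ∀ k, 1 ≤ cntK (ucbEState e e' t) k →
      |muHat (ucbEState e e' t) k - lf k| <
        1 / 5 * Real.sqrt (e / cntK (ucbEState e e' t) k)) :
    brHatE e e' T = br := by
  by_contra hne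
  set i := brHatE e e' T with hi
  have hmin : muHat (ucbEState e e' T) i ≤ muHat (ucbEState e e' T) br :=
    argminF_le (fun k => muHat (ucbEState e e' T) k) br
  set c : Fin nf → ℕ := fun k => cntK (ucbEState e e' T) k with hc
  have hc1 : ∀ k, 1 ≤ c k := all_pulled e e' T hT
  have hsq : ∀ a b : ℕ, 1 ≤ a → a ≤ b → Real.sqrt (e / b) ≤ Real.sqrt (e / a) := by
    intro a b ha hab
    apply Real.sqrt_le_sqrt
    have : (0:ℝ) < a := by exact_mod_cast ha
    have : (a:ℝ) ≤ b := by exact_mod_cast hab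
    gcongr
  set q := Real.sqrt (e / c br) with hq
  have hcb : (1:ℝ) ≤ c br := by exact_mod_cast hc1 br
  have hq0 : 0 < q := Real.sqrt_pos.2 (by positivity)
  have hq2 : q ^ 2 * c br = e := by
    rw [hq, Real.sq_sqrt (by positivity)]
    field_simp
  -- upper bound on the number of pulls of suboptimal arms
  have hub : ∀ k, k ≠ br →
      (c k : ℝ) - 1 ≤ 36 / 25 * e * (1 / (lf k - lf br + 4 / 5 * q) ^ 2) := by
    intro k hk
    have hd : 0 < lf k - lf br := sub_pos.2 (hbr k hk)
    rcases Nat.lt_or_ge (c k) 2 with h2 | h2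
    · have : c k = 1 := by have := hc1 k; omega
      rw [this]
      simp only [Nat.cast_one, sub_self]
      positivity
    · obtain ⟨t, ht, h3, h4⟩ := last_pull' e e' T k h2
      obtain ⟨h5, h6, h7⟩ := h4 br
      have h8 := (h4 k).1
      have g1 := abs_lt.1 (hg t ht k h8)
      have g2 := abs_lt.1 (hg t ht br h5)
      have g3 : q ≤ _ := hsq _ _ h5 h6
      set m := cntK (ucbEState e e' t) k
      have hm : (1:ℝ) ≤ m := by exact_mod_cast h8
      have h9 : lf k - lf br + 4 / 5 * q ≤ 6 / 5 * Real.sqrt (e / m) := by linarith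
      have h10 : (lf k - lf br + 4 / 5 * q) ^ 2 ≤ (6 / 5 * Real.sqrt (e / m)) ^ 2 :=
        pow_le_pow_left₀ (by positivity) h9 2
      rw [mul_pow, Real.sq_sqrt (by positivity)] at h10
      have h11 : (c k : ℝ) - 1 = m := by
        have : (m : ℝ) + 1 = c k := by exact_mod_cast h3
        linarith
      rw [h11, mul_one_div, le_div_iff₀ (by positivity)]
      calc (m:ℝ) * (lf k - lf br + 4 / 5 * q) ^ 2 ≤ m * ((6 / 5) ^ 2 * (e / m)) := by gcongr
        _ = 36 / 25 * e := by field_simp; norm_num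
  set D := lf i - lf br with hD
  have hD0 : 0 < D := sub_pos.2 (hbr i hne)
  -- many pulls of the best arm
  have hlow : 36 / 25 * e * (1 / D ^ 2 - 1 / (D + 4 / 5 * q) ^ 2) ≤ (c br : ℝ) - 1 := by
    have htot : ∑ k, ((c k : ℝ) - 1) = (T : ℝ) - nf := by
      rw [Finset.sum_sub_distrib]
      have := cnt_total e e' T
      have h' : ∑ k, (c k : ℝ) = T := by exact_mod_cast this
      rw [h']; simp
    have hs : ∑ k ∈ Finset.univ.erase br, (1 / (lf k - lf br) ^ 2 -
        1 / (lf k - lf br + 4 / 5 * q) ^ 2) ≥ 1 / D ^ 2 - 1 / (D + 4 / 5 * q) ^ 2 := by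
      refine Finset.single_le_sum (f := fun k => (1 / (lf k - lf br) ^ 2 -
        1 / (lf k - lf br + 4 / 5 * q) ^ 2)) ?_ (Finset.mem_erase.2 ⟨hne, Finset.mem_univ i⟩)
      intro k hk
      have hd : 0 < lf k - lf br := sub_pos.2 (hbr k (Finset.ne_of_mem_erase hk))
      rw [sub_nonneg]
      apply one_div_le_one_div_of_le (by positivity)
      apply pow_le_pow_left₀ hd.le
      linarith
    have hs2 : ∑ k ∈ Finset.univ.erase br, ((c k : ℝ) - 1) ≤
        ∑ k ∈ Finset.univ.erase br, 36 / 25 * e * (1 / (lf k - lf br + 4 / 5 * q) ^ 2) :=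
      Finset.sum_le_sum fun k hk => hub k (Finset.ne_of_mem_erase hk)
    rw [← Finset.mul_sum] at hs2
    rw [← Finset.add_sum_erase _ _ (Finset.mem_univ br)] at htot hH
    rw [Finset.sum_sub_distrib] at hs
    have h0 : 1 / (lf br - lf br) ^ 2 = 0 := by simp
    rw [h0, zero_add] at hH
    have := mul_le_mul_of_nonneg_left hs (show 0 ≤ 36 / 25 * e by positivity)
    rw [mul_sub (36 / 25 * e) (∑ _ ∈ _, _)] at this
    linarith
  have hpos : 0 < 1 / D ^ 2 - 1 / (D + 4 / 5 * q) ^ 2 := by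
    rw [sub_pos]
    apply one_div_lt_one_div_of_lt (by positivity)
    apply pow_lt_pow_left₀ _ hD0.le (by norm_num)
    linarith
  have hcb2 : 2 ≤ c br := by
    have : (0:ℝ) < (c br : ℝ) - 1 := lt_of_lt_of_le (by positivity) hlow
    have : (1:ℝ) < c br := by linarith
    exact_mod_cast this
  have hqD : q ≤ 11 / 10 * D := by
    by_contra hcon
    push Not at hcon
    have a1 : 1 / (D + 4 / 5 * q) ^ 2 ≤ 1 / (47 / 25 * D) ^ 2 := by
      apply one_div_le_one_div_of_le (by positivity)
      apply pow_le_pow_left₀ (by positivity)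
      linarith
    have a2 : (1 / D ^ 2) * (1 - 625 / 2209) ≤ 1 / D ^ 2 - 1 / (D + 4 / 5 * q) ^ 2 := by
      have : 1 / (47 / 25 * D) ^ 2 = (1 / D ^ 2) * (625 / 2209) := by field_simp; norm_num
      linarith
    have a3 : 36 / 25 * e * ((1 / D ^ 2) * (1 - 625 / 2209)) ≤ c br :=
      (mul_le_mul_of_nonneg_left a2 (by positivity)).trans (by linarith)
    have a4 : (121 / 100) * D ^ 2 ≤ q ^ 2 := by nlinarith
    have a5 : 121 / 100 * c br ≤ e * (1 / D ^ 2) := by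
      rw [mul_one_div, le_div_iff₀ (by positivity), ← hq2]
      nlinarith
    nlinarith
  obtain ⟨t, ht, h3, h4⟩ := last_pull' e e' T br hcb2
  obtain ⟨h5, h6, h7⟩ := h4 i
  have h8 := (h4 br).1
  have g1 := abs_lt.1 (hg t ht i h5)
  have g2 := abs_lt.1 (hg t ht br h8)
  have g3 := hsq _ _ h5 h6
  have g4 := abs_lt.1 (hg T le_rfl i (hc1 i))
  have g5 := abs_lt.1 (hg T le_rfl br (hc1 br))
  have g6 : Real.sqrt (e / cntK (ucbEState e e' t) br) ≤ 3 / 2 * q := by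
    apply Real.sqrt_le_iff.2
    refine ⟨by positivity, ?_⟩
    set p := cntK (ucbEState e e' t) br
    have hp : (1:ℝ) ≤ p := by exact_mod_cast h8
    have hp' : (p : ℝ) + 1 = c br := by exact_mod_cast h3
    rw [div_le_iff₀ (by positivity), ← hq2, ← hp']
    nlinarith [sq_nonneg q, mul_nonneg (sq_nonneg q) (sub_nonneg.2 hp)]
  change _ ∧ _ < 1 / 5 * q at g5
  linarith

end det

theorem argminF_congr {k : ℕ} [NeZero k] (f g : Fin k → ℝ)
    (h : (fun p : Fin k × Fin k => f p.1 ≤ f p.2) = fun p => g p.1 ≤ g p.2) :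
    argminF f = argminF g := by
  have h' : ∀ i j, (f i ≤ f j) = (g i ≤ g j) := fun i j => congrFun h (i, j)
  unfold argminF
  congr 1
  funext i
  simp only [h']

theorem measurable_argminF {k : ℕ} [NeZero k] : Measurable (argminF : (Fin k → ℝ) → Fin k) := by
  let A : (Fin k → ℝ) → (Fin k × Fin k → Prop) := fun f p => f p.1 ≤ f p.2
  have hA : Measurable A := by
    refine measurable_pi_iff.2 fun p => ?_
    exact measurableSet_setOf.1 (measurableSet_le (measurable_pi_apply _) (measurable_pi_apply _))
  have hf : Function.FactorsThrough (argminF : (Fin k → ℝ) → Fin k) A :=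
    fun f g h => argminF_congr f g h
  have : (argminF : (Fin k → ℝ) → Fin k) = Function.extend A argminF (fun _ => 0) ∘ A :=
    (hf.extend_comp _).symm
  rw [this]
  exact (measurable_of_finite _).comp hA

section meas

variable {nf : ℕ} [NeZero nf] (e : ℝ)

theorem measurable_choice_of {Ω : Type*} [MeasurableSpace Ω] (h : Ω → List (Fin nf × ℝ))
    (h1 : ∀ k, Measurable fun ω => cntK (h ω) k) (h2 : ∀ k, Measurable fun ω => sumK (h ω) k) :
    Measurable fun ω => ucbEChoice e (h ω) := by
  let F : (Fin nf → ℕ) → Fin nf := fun c =>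
    if hu : (Finset.univ.filter fun k : Fin nf => c k = 0).Nonempty then
      (Finset.univ.filter fun k : Fin nf => c k = 0).min' hu else 0
  have hmu : ∀ k, Measurable fun ω => muHat (h ω) k - Real.sqrt (e / cntK (h ω) k) := by
    intro k
    have hc : Measurable fun ω => ((cntK (h ω) k : ℕ) : ℝ) :=
      (measurable_from_top (f := fun n : ℕ => (n : ℝ))).comp (h1 k)
    simp only [muHat_eq]
    exact ((h2 k).div hc).sub ((measurable_const.div hc).sqrt)
  have hS : MeasurableSet {ω | ∃ k, cntK (h ω) k = 0} := by
    rw [Set.setOf_exists]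
    exact MeasurableSet.iUnion fun k => h1 k (measurableSet_singleton 0)
  have : (fun ω => ucbEChoice e (h ω)) = fun ω =>
      if ω ∈ {ω | ∃ k, cntK (h ω) k = 0} then F (fun k => cntK (h ω) k) else
        argminF fun k => muHat (h ω) k - Real.sqrt (e / cntK (h ω) k) := by
    funext ω
    by_cases hω : ∃ k, cntK (h ω) k = 0
    · have hu : (Finset.univ.filter fun k : Fin nf => cntK (h ω) k = 0).Nonempty := by
        obtain ⟨k, hk⟩ := hω
        exact ⟨k, by simp [hk]⟩
      simp only [Set.mem_setOf_eq, hω, if_true, F, ucbEChoice, hu, dite_true]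
    · have hu : ¬ (Finset.univ.filter fun k : Fin nf => cntK (h ω) k = 0).Nonempty := by
        rintro ⟨k, hk⟩
        simp only [Finset.mem_filter] at hk
        exact hω ⟨k, hk.2⟩
      simp only [Set.mem_setOf_eq, hω, if_false, ucbEChoice, hu, dite_false]
  rw [this]
  refine Measurable.ite hS ?_ ?_
  · exact (measurable_from_top (α := Fin nf → ℕ) (f := F)).comp
      (by
        have : Measurable fun ω => fun k => cntK (h ω) k := measurable_pi_iff.2 h1
        intro s _
        exact this (Set.to_countable s).measurableSet)
  · exact measurable_argminF.comp (measurable_pi_iff.2 hmu)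

theorem measurable_state (t : ℕ) :
    (∀ k, Measurable fun w : ℕ → Fin nf → ℝ => cntK (ucbEState e w t) k) ∧
    (∀ k, Measurable fun w : ℕ → Fin nf → ℝ => sumK (ucbEState e w t) k) := by
  induction t with
  | zero => constructor <;> intro k <;> simp [ucbEState, cntK, sumK]
  | succ t ih =>
    have hc := measurable_choice_of e _ ih.1 ih.2
    constructor
    · intro k
      simp only [cnt_succ]
      exact (ih.1 k).add (Measurable.ite (hc (measurableSet_singleton k))
        measurable_const measurable_const)
    · intro k
      simp only [sum_succ']
      exact (ih.2 k).add (Measurable.ite (hc (measurableSet_singleton k))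
        ((measurable_pi_apply k).comp (measurable_pi_apply t)) measurable_const)

/-- Exponential supermartingale stopped after `s` pulls of arm `k`. -/
def Wp (k : Fin nf) (s : ℕ) (lam m : ℝ) (e' : ℕ → Fin nf → ℝ) : ℕ → ℝ
  | 0 => 1
  | t + 1 => Wp k s lam m e' t *
      if ucbEChoice e (ucbEState e e' t) = k ∧ cntK (ucbEState e e' t) k < s then
        Real.exp (lam * (e' t k - m) - lam ^ 2 / 8) else 1

variable (k : Fin nf) (s : ℕ) (lam m : ℝ)

theorem Wp_nonneg (e' : ℕ → Fin nf → ℝ) (t : ℕ) : 0 ≤ Wp e k s lam m e' t := by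
  induction t with
  | zero => simp [Wp]
  | succ t ih =>
    rw [Wp]
    apply mul_nonneg ih
    split_ifs <;> positivity

theorem measurableSet_act (t : ℕ) : MeasurableSet {e' : ℕ → Fin nf → ℝ |
    ucbEChoice e (ucbEState e e' t) = k ∧ cntK (ucbEState e e' t) k < s} := by
  obtain ⟨h1, h2⟩ := measurable_state (nf := nf) e t
  exact ((measurable_choice_of e _ h1 h2) (measurableSet_singleton k)).inter
    ((h1 k) measurableSet_Iio)

theorem measurable_Wp (t : ℕ) : Measurable fun e' : ℕ → Fin nf → ℝ => Wp e k s lam m e' t := by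
  induction t with
  | zero => simp [Wp]
  | succ t ih =>
    simp only [Wp]
    refine ih.mul (Measurable.ite (measurableSet_act e k s t) ?_ measurable_const)
    have : Measurable fun w : ℕ → Fin nf → ℝ => w t k :=
      (measurable_pi_apply k).comp (measurable_pi_apply t)
    fun_prop

theorem Wp_eq (e' : ℕ → Fin nf → ℝ) (t : ℕ) (h : cntK (ucbEState e e' t) k ≤ s) :
    Wp e k s lam m e' t = Real.exp (lam * (sumK (ucbEState e e' t) k -
      cntK (ucbEState e e' t) k * m) - lam ^ 2 / 8 * cntK (ucbEState e e' t) k) := by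
  induction t with
  | zero => simp [Wp, ucbEState, sumK, cntK]
  | succ t ih =>
    have h1 := cnt_succ e e' t k
    rw [Wp, ih (by omega), sum_succ', cnt_succ]
    by_cases hc : ucbEChoice e (ucbEState e e' t) = k
    · simp only [hc, if_true] at h1
      have : cntK (ucbEState e e' t) k < s := by omega
      simp only [hc, this, and_self, if_true]
      rw [← Real.exp_add]
      push_cast
      ring_nf
    · simp [hc]

theorem Wp_stop (e' : ℕ → Fin nf → ℝ) (t : ℕ) (h : cntK (ucbEState e e' t) k = s) (T : ℕ)
    (hT : t ≤ T) : Wp e k s lam m e' T = Wp e k s lam m e' t := by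
  induction T, hT using Nat.le_induction with
  | base => rfl
  | succ T hT ih =>
    have := cnt_mono e e' k hT
    simp only at this
    rw [Wp, if_neg (by omega), mul_one, ih]

theorem state_congr (a b : ℕ → Fin nf → ℝ) (t : ℕ) (h : ∀ i < t, a i = b i) :
    ucbEState e a t = ucbEState e b t := by
  induction t with
  | zero => rfl
  | succ t ih =>
    simp only [ucbEState, ih fun i hi => h i (by omega), h t (by omega)]

theorem Wp_congr (a b : ℕ → Fin nf → ℝ) (t : ℕ) (h : ∀ i < t, a i = b i) :
    Wp e k s lam m a t = Wp e k s lam m b t := by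
  induction t with
  | zero => rfl
  | succ t ih =>
    simp only [Wp, ih fun i hi => h i (by omega), h t (by omega),
      state_congr e a b t fun i hi => h i (by omega)]

theorem measurable_eOf (N : ℕ) :
    Measurable (eOf N : (Fin N → Fin nf → ℝ) → ℕ → Fin nf → ℝ) := by
  refine measurable_pi_iff.2 fun t => ?_
  unfold eOf
  by_cases h : t < N
  · simp only [h, dite_true]
    exact measurable_pi_apply _
  · simp only [h, dite_false]
    exact measurable_const

theorem hoeff (ν : Measure (Fin nf → ℝ)) (hν : IsProbabilityMeasure ν)
    (hmean : ∫ x, x k ∂ν = m) (hbd : ∀ᵐ x ∂ν, x k ∈ Set.Icc (0 : ℝ) 1) :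
    ∫⁻ x, ENNReal.ofReal (Real.exp (lam * (x k - m) - lam ^ 2 / 8)) ∂ν ≤ 1 := by
  have h := ProbabilityTheory.hasSubgaussianMGF_of_mem_Icc (μ := ν) (X := fun x => x k)
    (measurable_pi_apply k).aemeasurable hbd
  rw [hmean] at h
  have hi := h.integrable_exp_mul lam
  have hl := h.mgf_le lam
  have hi2 : Integrable (fun x : Fin nf → ℝ =>
      Real.exp (lam * (x k - m) - lam ^ 2 / 8)) ν := by
    simp only [sub_eq_add_neg _ (lam ^ 2 / 8), Real.exp_add]
    exact hi.mul_const _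
  rw [← ofReal_integral_eq_lintegral_ofReal hi2 (ae_of_all _ fun x => (Real.exp_pos _).le)]
  rw [ENNReal.ofReal_le_one]
  simp only [sub_eq_add_neg _ (lam ^ 2 / 8), Real.exp_add]
  rw [integral_mul_const]
  unfold ProbabilityTheory.mgf at hl
  refine (mul_le_mul_of_nonneg_right hl (Real.exp_pos _).le).trans ?_
  rw [← Real.exp_add, Real.exp_le_one_iff]
  simp
  linarith

theorem lintegral_Wp (ν : Measure (Fin nf → ℝ)) (hν : IsProbabilityMeasure ν)
    (hmean : ∫ x, x k ∂ν = m) (hbd : ∀ᵐ x ∂ν, x k ∈ Set.Icc (0 : ℝ) 1) (n : ℕ) :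
    ∫⁻ ω, ENNReal.ofReal (Wp e k s lam m (eOf n ω) n) ∂(Measure.pi fun _ : Fin n => ν) ≤ 1 := by
  induction n with
  | zero => simp [Wp]
  | succ n ih =>
    have hmp := measurePreserving_piFinSuccAbove (fun _ : Fin (n + 1) => ν) (Fin.last n)
    have hmeas : Measurable fun ω : Fin (n + 1) → Fin nf → ℝ =>
        ENNReal.ofReal (Wp e k s lam m (eOf (n + 1) ω) (n + 1)) :=
      ((measurable_Wp e k s lam m (n + 1)).comp (measurable_eOf (n + 1))).ennreal_ofReal
    rw [← (hmp.symm _).lintegral_comp hmeas]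
    have hm2 : Measurable fun p : (Fin nf → ℝ) × (Fin n → Fin nf → ℝ) =>
        ENNReal.ofReal (Wp e k s lam m (eOf (n + 1)
          ((MeasurableEquiv.piFinSuccAbove (fun _ => Fin nf → ℝ) (Fin.last n)).symm p))
          (n + 1)) :=
      hmeas.comp (MeasurableEquiv.measurable _)
    rw [lintegral_prod_symm _ hm2.aemeasurable]
    refine le_trans (lintegral_mono fun y => ?_) ih
    have key : ∀ x : Fin nf → ℝ, Wp e k s lam m (eOf (n + 1)
        ((MeasurableEquiv.piFinSuccAbove (fun _ => Fin nf → ℝ) (Fin.last n)).symm (x, y)))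
          (n + 1) = Wp e k s lam m (eOf n y) n *
      if ucbEChoice e (ucbEState e (eOf n y) n) = k ∧ cntK (ucbEState e (eOf n y) n) k < s then
        Real.exp (lam * (x k - m) - lam ^ 2 / 8) else 1 := by
      intro x
      set z := (MeasurableEquiv.piFinSuccAbove (fun _ => Fin nf → ℝ) (Fin.last n)).symm (x, y)
        with hz
      have z1 : ∀ i < n, eOf (n + 1) z i = eOf n y i := by
        intro i hi
        have hi' : i < n + 1 := by omega
        simp only [eOf, hi, hi', dite_true]
        have := Fin.insertNth_apply_succAbove (α := fun _ => Fin nf → ℝ) (Fin.last n) x y ⟨i, hi⟩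
        rw [← this]
        simp only [Fin.succAbove_last]
        rfl
      have z2 : eOf (n + 1) z n = x := by
        simp only [eOf, Nat.lt_succ_self, dite_true]
        exact Fin.insertNth_apply_same (α := fun _ => Fin nf → ℝ) (Fin.last n) x y
      rw [Wp, z2, Wp_congr e k s lam m _ _ n z1, state_congr e _ _ n z1]
    simp only [key]
    split_ifs with hact
    · simp only [ENNReal.ofReal_mul (Wp_nonneg e k s lam m _ _)]
      rw [lintegral_const_mul' _ _ ENNReal.ofReal_ne_top]
      calc _ ≤ ENNReal.ofReal (Wp e k s lam m (eOf n y) n) * 1 := by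
            gcongr
            exact hoeff k lam m ν hν hmean hbd
        _ = _ := mul_one _
    · simp

theorem meas_Wp (ν : Measure (Fin nf → ℝ)) (hν : IsProbabilityMeasure ν)
    (hmean : ∫ x, x k ∂ν = m) (hbd : ∀ᵐ x ∂ν, x k ∈ Set.Icc (0 : ℝ) 1) (n : ℕ) (y : ℝ) :
    (Measure.pi fun _ : Fin n => ν) {ω | Real.exp y ≤ Wp e k s lam m (eOf n ω) n} ≤
      ENNReal.ofReal (Real.exp (-y)) := by
  have hmeas : Measurable fun ω : Fin n → Fin nf → ℝ =>
      ENNReal.ofReal (Wp e k s lam m (eOf n ω) n) :=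
    ((measurable_Wp e k s lam m n).comp (measurable_eOf n)).ennreal_ofReal
  have h := (mul_meas_ge_le_lintegral (μ := Measure.pi fun _ : Fin n => ν) hmeas
    (ENNReal.ofReal (Real.exp y))).trans (lintegral_Wp e k s lam m ν hν hmean hbd n)
  have hset : {ω : Fin n → Fin nf → ℝ | Real.exp y ≤ Wp e k s lam m (eOf n ω) n} ⊆
      {ω | ENNReal.ofReal (Real.exp y) ≤ ENNReal.ofReal (Wp e k s lam m (eOf n ω) n)} :=
    fun ω hω => ENNReal.ofReal_le_ofReal hω
  refine (measure_mono hset).trans ?_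
  rw [Real.exp_neg, ENNReal.ofReal_inv_of_pos (Real.exp_pos y)]
  rw [ENNReal.le_inv_iff_mul_le, mul_comm]
  exact h

end meas

/-- Trajectories violating the concentration bound for arm `k` after `s` pulls. -/
def badSet {nf : ℕ} [NeZero nf] (e : ℝ) (lf : Fin nf → ℝ) (n : ℕ) (k : Fin nf) (s : ℕ) (σ : ℝ) :
    Set (Fin n → Fin nf → ℝ) :=
  {ω | Real.exp (2 * e / 25) ≤
    Wp e k s (σ * (4 / 5 * Real.sqrt (e / s))) (lf k) (eOf n ω) n}

theorem bad_mem {nf : ℕ} [NeZero nf] (e : ℝ) (he : 0 < e) (lf : Fin nf → ℝ) (n : ℕ)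
    (ω : Fin n → Fin nf → ℝ) (t : ℕ) (ht : t ≤ n) (k : Fin nf)
    (hk : 1 ≤ cntK (ucbEState e (eOf n ω) t) k)
    (hb : 1 / 5 * Real.sqrt (e / cntK (ucbEState e (eOf n ω) t) k) ≤
      |muHat (ucbEState e (eOf n ω) t) k - lf k|) :
    ω ∈ badSet e lf n k (cntK (ucbEState e (eOf n ω) t) k) 1 ∪
      badSet e lf n k (cntK (ucbEState e (eOf n ω) t) k) (-1) := by
  set s := cntK (ucbEState e (eOf n ω) t) k with hs
  have hs1 : (1:ℝ) ≤ s := by exact_mod_cast hk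
  set r := Real.sqrt (e / s) with hr
  have hr0 : 0 ≤ r := Real.sqrt_nonneg _
  have hr2 : r ^ 2 * s = e := by
    rw [hr, Real.sq_sqrt (by positivity)]
    field_simp
  have hW : ∀ lam, Wp e k s lam (lf k) (eOf n ω) n =
      Real.exp (lam * (s * (muHat (ucbEState e (eOf n ω) t) k - lf k)) - lam ^ 2 / 8 * s) := by
    intro lam
    rw [Wp_stop e k s lam (lf k) (eOf n ω) t rfl n ht, Wp_eq e k s lam (lf k) (eOf n ω) t le_rfl,
      muHat_eq, ← hs]
    congr 3
    field_simp
  set d := muHat (ucbEState e (eOf n ω) t) k - lf k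
  simp only [badSet, Set.mem_union, Set.mem_setOf_eq, hW, Real.exp_le_exp]
  have key : ∀ d' : ℝ, 1 / 5 * r ≤ d' →
      2 * e / 25 ≤ 4 / 5 * r * (s * d') - (4 / 5 * r) ^ 2 / 8 * s := by
    intro d' hd'
    have : 4 / 5 * r * (s * (1 / 5 * r)) ≤ 4 / 5 * r * (s * d') := by gcongr
    nlinarith
  rcases le_abs.1 hb with h | h
  · left
    have := key d h
    rw [one_mul]
    exact this
  · right
    have := key (-d) h
    convert this using 1
    ring

theorem first_part (nf Ta : ℕ) (hTa : nf ≤ Ta) [NeZero nf]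
    (lf : Fin nf → ℝ)
    (br : Fin nf) (hbr : ∀ k, k ≠ br → lf br < lf k)
    (ν : Measure (Fin nf → ℝ)) (hν : IsProbabilityMeasure ν)
    (hmean : ∀ k, ∫ x, x k ∂ν = lf k)
    (hbd : ν {x | ∀ k, x k ∈ Set.Icc (0 : ℝ) 1} = 1)
    (e : ℝ) (he : 0 < e)
    (hH : 36 / 25 * e * ∑ k, 1 / (lf k - lf br) ^ 2 ≤ (Ta : ℝ) - nf) :
    (Measure.pi fun _ : Fin Ta => ν) {ω | brHatE e (eOf Ta ω) Ta ≠ br} ≤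
        ENNReal.ofReal (2 * Ta * nf * Real.exp (-(2 * e) / 25)) := by
  have hbd' : ∀ᵐ x ∂ν, ∀ k, x k ∈ Set.Icc (0 : ℝ) 1 := by
    have hms : MeasurableSet {x : Fin nf → ℝ | ∀ k, x k ∈ Set.Icc (0 : ℝ) 1} := by
      rw [Set.setOf_forall]
      exact MeasurableSet.iInter fun k => (measurable_pi_apply k) measurableSet_Icc
    exact (mem_ae_iff_prob_eq_one hms).2 hbd
  have hbk : ∀ k, ∀ᵐ x ∂ν, x k ∈ Set.Icc (0 : ℝ) 1 := fun k => hbd'.mono fun x hx => hx k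
  have hsub : {ω | brHatE e (eOf Ta ω) Ta ≠ br} ⊆
      ⋃ p ∈ (Finset.univ : Finset (Fin nf)) ×ˢ Finset.Icc 1 Ta,
        (badSet e lf Ta p.1 p.2 1 ∪ badSet e lf Ta p.1 p.2 (-1)) := by
    intro ω hω
    by_contra hn
    apply hω
    refine good_imp e (eOf Ta ω) Ta hTa lf br hbr he hH ?_
    intro t ht k hk
    by_contra hb
    push Not at hb
    apply hn
    have := bad_mem e he lf Ta ω t ht k hk hb
    have hle : cntK (ucbEState e (eOf Ta ω) t) k ≤ Ta := by
      have h1 := cnt_total e (eOf Ta ω) t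
      have h2 := Finset.single_le_sum (f := fun k => cntK (ucbEState e (eOf Ta ω) t) k)
        (fun _ _ => Nat.zero_le _) (Finset.mem_univ k)
      omega
    refine Set.mem_biUnion (x := (k, cntK (ucbEState e (eOf Ta ω) t) k)) ?_ this
    simp [hk, hle]
  have hb1 : ∀ k s σ, (σ = 1 ∨ σ = -1) → (Measure.pi fun _ : Fin Ta => ν) (badSet e lf Ta k s σ) ≤
      ENNReal.ofReal (Real.exp (-(2 * e) / 25)) := by
    intro k s σ _
    have := meas_Wp e k s (σ * (4 / 5 * Real.sqrt (e / s))) (lf k) ν hν (hmean k) (hbk k) Ta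
      (2 * e / 25)
    rwa [← neg_div] at this
  calc _ ≤ _ := measure_mono hsub
    _ ≤ _ := measure_biUnion_finset_le _ _
    _ ≤ ∑ p ∈ (Finset.univ : Finset (Fin nf)) ×ˢ Finset.Icc 1 Ta,
        (2 * ENNReal.ofReal (Real.exp (-(2 * e) / 25))) := by
      refine Finset.sum_le_sum fun p _ => (measure_union_le _ _).trans ?_
      rw [two_mul]
      exact add_le_add (hb1 _ _ _ (Or.inl rfl)) (hb1 _ _ _ (Or.inr rfl))
    _ = _ := by
      rw [Finset.sum_const, Finset.card_product]
      simp only [Finset.card_univ, Fintype.card_fin, Nat.card_Icc, Nat.add_sub_cancel, nsmul_eq_mul]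
      rw [ENNReal.ofReal_mul (by positivity), ENNReal.ofReal_mul (by positivity),
        ENNReal.ofReal_mul (by positivity)]
      simp only [ENNReal.ofReal_natCast, ENNReal.ofReal_ofNat]
      push_cast
      ring

/-- UCB-E best-arm identification, Audibert–Bubeck.  Run UCB-E for `Ta` pulls
on `n_f` arms with `[0,1]`-valued noisy losses of means `lf k`, unique best arm `br`, gaps
`Δ_k = lf k − lf br` and hardness `H = ∑_k 1/Δ_k²`.  If `0 < e ≤ (25/36)(Ta − n_f)/H`, then the
probability that the resulting best-arm predictor is wrong is at most `2 Ta n_f exp(−2e/25)`;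
in particular, for `e = (25/36)(Ta − n_f)/H` it is at most `2 Ta n_f exp(−(Ta − n_f)/(18H))`. -/
theorem stmt10 (nf Ta : ℕ) (hnf : 2 ≤ nf) (hTa : nf ≤ Ta) [NeZero nf]
    (lf : Fin nf → ℝ) (hlf : ∀ k, lf k ∈ Set.Icc (0 : ℝ) 1)
    (br : Fin nf) (hbr : ∀ k, k ≠ br → lf br < lf k)
    (ν : Measure (Fin nf → ℝ)) (hν : IsProbabilityMeasure ν)
    (hmean : ∀ k, ∫ x, x k ∂ν = lf k)
    (hbd : ν {x | ∀ k, x k ∈ Set.Icc (0 : ℝ) 1} = 1) :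
    let H : ℝ := ∑ k, 1 / (lf k - lf br) ^ 2
    (∀ e : ℝ, 0 < e → e ≤ 25 / 36 * ((Ta : ℝ) - nf) / H →
      (Measure.pi fun _ : Fin Ta => ν) {ω | brHatE e (eOf Ta ω) Ta ≠ br} ≤
        ENNReal.ofReal (2 * Ta * nf * Real.exp (-(2 * e) / 25))) ∧
    ((Measure.pi fun _ : Fin Ta => ν)
        {ω | brHatE (25 / 36 * ((Ta : ℝ) - nf) / H) (eOf Ta ω) Ta ≠ br} ≤
      ENNReal.ofReal (2 * Ta * nf * Real.exp (-((Ta : ℝ) - nf) / (18 * H)))) := by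
  intro H
  have hHpos : 0 < H := by
    haveI : Nontrivial (Fin nf) := Fin.nontrivial_iff_two_le.2 hnf
    obtain ⟨j, hj⟩ := exists_ne br
    refine Finset.sum_pos' (fun k _ => by positivity) ⟨j, Finset.mem_univ j, ?_⟩
    have : 0 < lf j - lf br := sub_pos.2 (hbr j hj)
    positivity
  have h1 : ∀ e : ℝ, 0 < e → e ≤ 25 / 36 * ((Ta : ℝ) - nf) / H →
      (Measure.pi fun _ : Fin Ta => ν) {ω | brHatE e (eOf Ta ω) Ta ≠ br} ≤
        ENNReal.ofReal (2 * Ta * nf * Real.exp (-(2 * e) / 25)) := by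
    intro e he heH
    refine first_part nf Ta hTa lf br hbr ν hν hmean hbd e he ?_
    rw [le_div_iff₀ hHpos] at heH
    change 36 / 25 * e * H ≤ _
    linarith
  refine ⟨h1, ?_⟩
  rcases hTa.eq_or_lt with h | h
  · refine prob_le_one.trans ?_
    rw [← h]
    have : (2:ℝ) ≤ nf := by exact_mod_cast hnf
    simp only [sub_self, neg_zero, zero_div, Real.exp_zero, mul_one]
    rw [ENNReal.one_le_ofReal]
    nlinarith
  · have h' : (0:ℝ) < (Ta : ℝ) - nf := sub_pos.2 (by exact_mod_cast h)
    have h2 := h1 _ (by positivity) le_rfl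
    have h3 : -(2 * (25 / 36 * ((Ta : ℝ) - nf) / H)) / 25 = -((Ta : ℝ) - nf) / (18 * H) := by
      field_simp
      ring
    rwa [h3] at h2

end
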